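/- Let [[A, B],[B*, C]] be a positive semidefinite 2×2 block matrix with k×k blocks, and let e_t(X) denote the t-th elementary symmetric polynomial of the eigenvalues of X. Then for each t ∈ {1,…,k}: e_t(A)e_t(C) + e_t(B*)e_t(B) ≥ e_t(AC) + e_t(B*B). -/

import Mathlib

open Matrix BigOperators ComplexOrder

/-- The t-th elementary symmetric function of the eigenvalues of a complex matrix
(the eigenvalues counted as the roots of the characteristic polynomial). -/
noncomputable def esym {k : ℕ} (t : ℕ) (X : Matrix (Fin k) (Fin k) ℂ) : ℂ :=
  X.charpoly.roots.esymm t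

open Finset in
theorem trace_ineq {n m : Type*} [Fintype n] [Fintype m] (P Q : Matrix n m ℂ) :
    ((P * Pᴴ * (Q * Qᴴ)).trace + (Q * Pᴴ * (P * Qᴴ)).trace).re ≤
    ((P * Pᴴ).trace * (Q * Qᴴ).trace + (Q * Pᴴ).trace * (P * Qᴴ).trace).re := by
  let F : n → n → m → m → ℂ := fun i j p q => P i p * Q j q
  let z : n → n → m → m → ℂ := fun i j p q => F i j p q - F j i p q - F i j q p + F j i q p
  have h0 : 0 ≤ (∑ i, ∑ j, ∑ p, ∑ q, star (z i j p q) * z i j p q).re := by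
    simp only [Complex.re_sum]
    refine sum_nonneg fun i _ => sum_nonneg fun j _ => sum_nonneg fun p _ => sum_nonneg fun q _ => ?_
    have : star (z i j p q) * z i j p q = (Complex.normSq (z i j p q) : ℂ) :=
      (Complex.normSq_eq_conj_mul_self (z := z i j p q)).symm
    rw [this, Complex.ofReal_re]
    exact Complex.normSq_nonneg _
  have e2 : ∑ i, ∑ j, ∑ p, ∑ q, star (F j i p q) * z i j p q
      = - ∑ i, ∑ j, ∑ p, ∑ q, star (F i j p q) * z i j p q := by
    rw [sum_comm]
    simp only [← sum_neg_distrib]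
    refine sum_congr rfl fun i _ => sum_congr rfl fun j _ => sum_congr rfl fun p _ =>
      sum_congr rfl fun q _ => ?_
    simp only [z]; ring
  have e3 : ∑ i, ∑ j, ∑ p, ∑ q, star (F i j q p) * z i j p q
      = - ∑ i, ∑ j, ∑ p, ∑ q, star (F i j p q) * z i j p q := by
    simp only [← sum_neg_distrib]
    refine sum_congr rfl fun i _ => sum_congr rfl fun j _ => ?_
    rw [sum_comm]
    refine sum_congr rfl fun p _ => sum_congr rfl fun q _ => ?_
    simp only [z]; ring
  have e4 : ∑ i, ∑ j, ∑ p, ∑ q, star (F j i q p) * z i j p q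
      = ∑ i, ∑ j, ∑ p, ∑ q, star (F i j p q) * z i j p q := by
    rw [sum_comm]
    refine sum_congr rfl fun i _ => sum_congr rfl fun j _ => ?_
    rw [sum_comm]
    refine sum_congr rfl fun p _ => sum_congr rfl fun q _ => ?_
    simp only [z]; ring
  have e : ∑ i, ∑ j, ∑ p, ∑ q, star (z i j p q) * z i j p q
      = 4 * ∑ i, ∑ j, ∑ p, ∑ q, star (F i j p q) * z i j p q := by
    have : ∑ i, ∑ j, ∑ p, ∑ q, star (z i j p q) * z i j p q
      = ∑ i, ∑ j, ∑ p, ∑ q, star (F i j p q) * z i j p q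
      - ∑ i, ∑ j, ∑ p, ∑ q, star (F j i p q) * z i j p q
      - ∑ i, ∑ j, ∑ p, ∑ q, star (F i j q p) * z i j p q
      + ∑ i, ∑ j, ∑ p, ∑ q, star (F j i q p) * z i j p q := by
      simp only [← sum_sub_distrib, ← sum_add_distrib]
      refine sum_congr rfl fun i _ => sum_congr rfl fun j _ => sum_congr rfl fun p _ =>
        sum_congr rfl fun q _ => ?_
      conv_lhs => rw [show star (z i j p q) = star (F i j p q) - star (F j i p q)
        - star (F i j q p) + star (F j i q p) by simp only [z, star_add, star_sub]]
      ring
    rw [this, e2, e3, e4]; ring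
  have t1 : (P * Pᴴ).trace * (Q * Qᴴ).trace
      = ∑ i, ∑ j, ∑ p, ∑ q, star (F i j p q) * F i j p q := by
    simp only [Matrix.trace, Matrix.diag, Matrix.mul_apply, sum_mul_sum, Matrix.conjTranspose_apply, F]
    refine sum_congr rfl fun i _ => sum_congr rfl fun j _ => sum_congr rfl fun p _ =>
        sum_congr rfl fun q _ => ?_
    rw [star_mul]; ring
  have t2 : (P * Pᴴ * (Q * Qᴴ)).trace
      = ∑ i, ∑ j, ∑ p, ∑ q, star (F i j p q) * F j i p q := by
    rw [sum_comm]
    simp only [Matrix.trace, Matrix.diag, Matrix.mul_apply, sum_mul_sum, Matrix.conjTranspose_apply, F]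
    refine sum_congr rfl fun i _ => sum_congr rfl fun j _ => sum_congr rfl fun p _ =>
        sum_congr rfl fun q _ => ?_
    rw [star_mul]; ring
  have t3 : (Q * Pᴴ * (P * Qᴴ)).trace
      = ∑ i, ∑ j, ∑ p, ∑ q, star (F i j p q) * F i j q p := by
    rw [sum_comm]
    simp only [Matrix.trace, Matrix.diag, Matrix.mul_apply, sum_mul_sum, Matrix.conjTranspose_apply, F]
    refine sum_congr rfl fun i _ => sum_congr rfl fun j _ => sum_congr rfl fun p _ =>
        sum_congr rfl fun q _ => ?_
    rw [star_mul]; ring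
  have t4 : (Q * Pᴴ).trace * (P * Qᴴ).trace
      = ∑ i, ∑ j, ∑ p, ∑ q, star (F i j p q) * F j i q p := by
    simp only [Matrix.trace, Matrix.diag, Matrix.mul_apply, sum_mul_sum, Matrix.conjTranspose_apply, F]
    refine sum_congr rfl fun i _ => sum_congr rfl fun j _ => sum_congr rfl fun p _ =>
        sum_congr rfl fun q _ => ?_
    rw [star_mul]; ring
  have tt : ∑ i, ∑ j, ∑ p, ∑ q, star (F i j p q) * z i j p q =
      (P * Pᴴ).trace * (Q * Qᴴ).trace + (Q * Pᴴ).trace * (P * Qᴴ).trace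
      - ((P * Pᴴ * (Q * Qᴴ)).trace + (Q * Pᴴ * (P * Qᴴ)).trace) := by
    rw [t1, t2, t3, t4]
    simp only [← sum_sub_distrib, ← sum_add_distrib]
    refine sum_congr rfl fun i _ => sum_congr rfl fun j _ => sum_congr rfl fun p _ =>
        sum_congr rfl fun q _ => ?_
    simp only [z]; ring
  rw [e, tt] at h0
  have : (4 : ℂ) = ((4 : ℝ) : ℂ) := by norm_num
  rw [this, Complex.re_ofReal_mul, Complex.sub_re] at h0
  linarith

/-- Compound matrix indexed by all functions. -/
def cmpd {n m : Type*} (t : ℕ) (X : Matrix n m ℂ) : Matrix (Fin t → n) (Fin t → m) ℂ :=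
  fun f g => (X.submatrix f g).det

theorem cmpd_conjTranspose {n m : Type*} (t : ℕ) (X : Matrix n m ℂ) :
    cmpd t Xᴴ = (cmpd t X)ᴴ := by
  ext f g
  simp only [cmpd, Matrix.conjTranspose_apply]
  rw [← Matrix.conjTranspose_submatrix, Matrix.det_conjTranspose]

theorem det_mul_expand {n m l : Type*} [Fintype m] (t : ℕ) (X : Matrix n m ℂ)
    (Y : Matrix m l ℂ) (f : Fin t → n) (g : Fin t → l) :
    ((X * Y).submatrix f g).det = ∑ h : Fin t → m, (∏ i, X (f i) (h i)) * (Y.submatrix h g).det := by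
  classical
  have h1 : (X * Y).submatrix f g = fun i => ∑ a : m, X (f i) a • (fun j => Y a (g j)) := by
    ext i j
    simp [Matrix.mul_apply, Finset.sum_apply]
  have h2 := (Matrix.detRowAlternating (n := Fin t) (R := ℂ)).toMultilinearMap.map_sum
    (fun i (a : m) => X (f i) a • (fun j => Y a (g j)))
  rw [h1]
  refine h2.trans (Finset.sum_congr rfl fun h _ => ?_)
  exact (Matrix.detRowAlternating (n := Fin t) (R := ℂ)).toMultilinearMap.map_smul_univ
    (fun i => X (f i) (h i)) (fun i j => Y (h i) (g j))

theorem cmpd_mul {n m l : Type*} [Fintype m] (t : ℕ) (X : Matrix n m ℂ)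
    (Y : Matrix m l ℂ) : cmpd t X * cmpd t Y = (t.factorial : ℂ) • cmpd t (X * Y) := by
  ext f g
  simp only [Matrix.mul_apply, Matrix.smul_apply, smul_eq_mul]
  have : ∀ h : Fin t → m, cmpd t X f h * cmpd t Y h g = ∑ σ : Equiv.Perm (Fin t),
      ((Equiv.Perm.sign σ : ℤ) : ℂ) * ((∏ i, X (f (σ i)) (h i)) * (Y.submatrix h g).det) := by
    intro h
    simp only [cmpd, Matrix.det_apply' (X.submatrix f h), Finset.sum_mul, Matrix.submatrix_apply,
      mul_assoc]
  simp only [this]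
  rw [Finset.sum_comm]
  have : ∀ σ : Equiv.Perm (Fin t), ∑ h : Fin t → m,
      ((Equiv.Perm.sign σ : ℤ) : ℂ) * ((∏ i, X (f (σ i)) (h i)) * (Y.submatrix h g).det)
      = cmpd t (X * Y) f g := by
    intro σ
    rw [← Finset.mul_sum]
    have := det_mul_expand t X Y (f ∘ σ) g
    simp only [Function.comp_apply] at this
    rw [← this]
    have h3 : (X * Y).submatrix (f ∘ σ) g = ((X * Y).submatrix f g).submatrix σ id := rfl
    rw [h3, Matrix.det_permute, ← mul_assoc]
    have : ((Equiv.Perm.sign σ : ℤ) : ℂ) * ((Equiv.Perm.sign σ : ℤ) : ℂ) = 1 := by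
      rw [← Int.cast_mul, ← Units.val_mul, Int.units_mul_self]; simp
    rw [this, one_mul, cmpd]
  simp only [this]
  simp [Fintype.card_perm]

theorem trace_cmpd {k : ℕ} (t : ℕ) (htk : t ≤ k) (X : Matrix (Fin k) (Fin k) ℂ) :
    (cmpd t X).trace = (t.factorial : ℂ) * esym t X := by
  have h1 : esym t X = ∑ s ∈ Finset.univ.powersetCard t,
      (X.submatrix (Subtype.val : s → Fin k) (Subtype.val : s → Fin k)).det := by
    have a := X.charpoly_coeff_eq_sum_minors t (by simpa using htk)
    have b := Polynomial.coeff_eq_esymm_roots_of_splits (IsAlgClosed.splits X.charpoly)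
      (k := k - t) (by simp)
    rw [X.charpoly_monic.leadingCoeff] at b
    simp only [Matrix.charpoly_natDegree_eq_dim, Fintype.card_fin, one_mul] at a b
    rw [Nat.sub_sub_self htk, a] at b
    have := mul_left_cancel₀ (pow_ne_zero t (by norm_num)) b
    exact this.symm
  rw [h1]
  classical
  have h2 : (cmpd t X).trace = ∑ f : Fin t → Fin k with Function.Injective f,
      (X.submatrix f f).det := by
    rw [Finset.sum_filter_of_ne]
    · rfl
    · intro f _ hf
      by_contra hn
      apply hf
      simp only [Function.Injective, not_forall] at hn
      obtain ⟨a, b, hab, hne⟩ := hn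
      apply Matrix.det_zero_of_row_eq hne
      ext j
      simp [hab]
  rw [h2, ← Finset.sum_fiberwise_of_maps_to (s := Finset.univ.filter _)
    (t := Finset.univ.powersetCard t) (g := fun f => Finset.univ.image f), Finset.mul_sum]
  · refine Finset.sum_congr rfl fun s hs => ?_
    have hs' : s.card = t := (Finset.mem_powersetCard.1 hs).2
    have hc : Fintype.card (Fin t ≃ s) = t.factorial := by
      rw [Fintype.card_equiv (Fintype.equivOfCardEq (by simp [hs']))]
      simp
    rw [← hc, ← nsmul_eq_mul, ← Finset.card_univ, ← Finset.sum_const]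
    symm
    refine Finset.sum_bij (fun (e : Fin t ≃ s) _ => fun i => (e i : Fin k)) ?_ ?_ ?_ ?_
    · intro e _
      simp only [Finset.mem_filter, Finset.mem_univ, true_and]
      refine ⟨fun a b hab => e.injective (Subtype.ext hab), ?_⟩
      ext x
      simp only [Finset.mem_image, Finset.mem_univ, true_and]
      constructor
      · rintro ⟨a, rfl⟩; exact (e a).2
      · intro hx; exact ⟨e.symm ⟨x, hx⟩, by simp⟩
    · intro e _ e' _ hee
      ext i
      exact congrArg Fin.val (congrFun hee i)
    · intro f hf
      simp only [Finset.mem_filter, Finset.mem_univ, true_and] at hf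
      have hm : ∀ i, f i ∈ s := fun i => by rw [← hf.2]; simp
      refine ⟨Equiv.ofBijective (fun i => (⟨f i, hm i⟩ : s)) ⟨?_, ?_⟩, Finset.mem_univ _, ?_⟩
      · intro a b hab
        exact hf.1 (congrArg Subtype.val hab)
      · rintro ⟨x, hx⟩
        rw [← hf.2] at hx
        obtain ⟨a, _, ha⟩ := Finset.mem_image.1 hx
        exact ⟨a, Subtype.ext ha⟩
      · rfl
    · intro e _
      have := Matrix.det_submatrix_equiv_self e
        (X.submatrix (Subtype.val : s → Fin k) (Subtype.val : s → Fin k))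
      rw [← this]
      rfl
  · intro f hf
    simp only [Finset.mem_filter, Finset.mem_univ, true_and] at hf
    simp [Finset.mem_powersetCard, Finset.card_image_of_injective _ hf]

/-- Theorem 5.3 (second inequality): e_t(A)e_t(C) + e_t(B*)e_t(B) ≥ e_t(AC) + e_t(B*B). -/
theorem stmt19 {k : ℕ} (A B C : Matrix (Fin k) (Fin k) ℂ)
    (h : (Matrix.fromBlocks A B Bᴴ C).PosSemidef)
    (t : ℕ) (ht1 : 1 ≤ t) (htk : t ≤ k) :
    (esym t A * esym t C + esym t Bᴴ * esym t B).re ≥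
      (esym t (A * C) + esym t (Bᴴ * B)).re := by
  obtain ⟨m, v, hv⟩ := Matrix.posSemidef_iff_eq_sum_vecMulVec.1 h
  let P : Matrix (Fin k) (Fin m) ℂ := fun i p => v p (Sum.inl i)
  let Q : Matrix (Fin k) (Fin m) ℂ := fun i p => v p (Sum.inr i)
  have key : ∀ x y, Matrix.fromBlocks A B Bᴴ C x y = ∑ p, v p x * star (v p y) := by
    intro x y
    rw [hv, Matrix.sum_apply]
    rfl
  have hA : A = P * Pᴴ := by
    ext i j; exact key (Sum.inl i) (Sum.inl j)
  have hB : B = P * Qᴴ := by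
    ext i j; exact key (Sum.inl i) (Sum.inr j)
  have hB' : Bᴴ = Q * Pᴴ := by
    ext i j; exact key (Sum.inr i) (Sum.inl j)
  have hC : C = Q * Qᴴ := by
    ext i j; exact key (Sum.inr i) (Sum.inr j)
  have T := trace_ineq (cmpd t P) (cmpd t Q)
  simp only [← cmpd_conjTranspose, cmpd_mul, ← hA, ← hB, ← hB', ← hC, Matrix.smul_mul,
    Matrix.mul_smul, Matrix.trace_smul, trace_cmpd t htk, smul_eq_mul] at T
  have hpos : (0 : ℝ) < (t.factorial : ℝ) ^ 4 := by positivity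
  have c1 : (t.factorial : ℂ) * (t.factorial * (t.factorial * (t.factorial * esym t (A * C)))) +
      (t.factorial : ℂ) * (t.factorial * (t.factorial * (t.factorial * esym t (Bᴴ * B))))
      = (((t.factorial : ℝ) ^ 4 : ℝ) : ℂ) * (esym t (A * C) + esym t (Bᴴ * B)) := by
    push_cast; ring
  have c2 : (t.factorial : ℂ) * (t.factorial * esym t A) * (t.factorial * (t.factorial * esym t C)) +
      (t.factorial : ℂ) * (t.factorial * esym t Bᴴ) * (t.factorial * (t.factorial * esym t B))
      = (((t.factorial : ℝ) ^ 4 : ℝ) : ℂ) * (esym t A * esym t C + esym t Bᴴ * esym t B) := by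
    push_cast; ring
  rw [c1, c2, Complex.re_ofReal_mul, Complex.re_ofReal_mul] at T
  exact le_of_mul_le_mul_left T hpos
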